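/- arXiv:math/0701670 — 6 statements merged into one kernel-verified Lean document; each statement's English description precedes it below -/
import Mathlib

section
/- Let f = Σ_{i=1}^{m} c_i X^{α_i} be a nonzero polynomial in ℂ[x_1,…,x_n] with distinct exponent vectors α_1,…,α_m, and let p_1,…,p_{m−1} ∈ ℂ^n be zeros of f. Let G be the determinant of the m×m matrix over ℂ[x_1,…,x_n] whose first row consists of the monomials X^{α_1},…,X^{α_m} and whose (i+1)-th row (for i = 1,…,m−1) consists of the constant polynomials P_i^{α_1},…,P_i^{α_m}, where P_i^{α_j} denotes the value of the monomial X^{α_j} at the point p_i. If G ≠ 0, then there exists a nonzero constant c₀ ∈ ℂ such that f = c₀ · G. -/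
open MvPolynomial

/-- If `f = Σ cᵢ X^{αᵢ}` is a nonzero polynomial with distinct exponent
vectors, `p₁, …, pₘ` are zeros of `f`, and the determinant `G` of the `(m+1)×(m+1)`
matrix whose first row consists of the monomials `X^{αⱼ}` and whose remaining rows
consist of the values of these monomials at the points `pᵢ` is nonzero, then
`f = c₀ · G` for some nonzero constant `c₀`. -/
theorem interpolation_determinant_recovers_polynomial
    (n m : ℕ)
    (α : Fin (m + 1) → (Fin n →₀ ℕ)) (hα : Function.Injective α)
    (c : Fin (m + 1) → ℂ)
    (f : MvPolynomial (Fin n) ℂ)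
    (hf : f = ∑ i : Fin (m + 1), monomial (α i) (c i))
    (hf0 : f ≠ 0)
    (p : Fin m → (Fin n → ℂ))
    (hp : ∀ i : Fin m, eval (p i) f = 0)
    (G : MvPolynomial (Fin n) ℂ)
    (hG : G = Matrix.det (Matrix.of (Fin.cases
      (fun j : Fin (m + 1) => monomial (α j) (1 : ℂ))
      (fun (i : Fin m) (j : Fin (m + 1)) =>
        C (eval (p i) (monomial (α j) (1 : ℂ)))))))
    (hG0 : G ≠ 0) :
    ∃ c₀ : ℂ, c₀ ≠ 0 ∧ f = C c₀ * G := by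
  set M : Matrix (Fin (m + 1)) (Fin (m + 1)) (MvPolynomial (Fin n) ℂ) :=
    Matrix.of (Fin.cases
      (fun j : Fin (m + 1) => monomial (α j) (1 : ℂ))
      (fun (i : Fin m) (j : Fin (m + 1)) =>
        C (eval (p i) (monomial (α j) (1 : ℂ))))) with hM
  have hc : ∃ j, c j ≠ 0 := by
    by_contra! h
    exact hf0 (by simp [hf, h])
  obtain ⟨j, hj⟩ := hc
  have hMc : M.mulVec (fun k => C (c k)) = Pi.single 0 f := by
    funext i
    refine Fin.cases ?_ (fun i => ?_) i
    · rw [Pi.single_eq_same, hf]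
      simp only [Matrix.mulVec, dotProduct, hM, Matrix.of_apply, Fin.cases_zero]
      refine Finset.sum_congr rfl fun k _ => ?_
      rw [mul_comm, C_mul_monomial, mul_one]
    · rw [Pi.single_eq_of_ne (Fin.succ_ne_zero i)]
      simp only [Matrix.mulVec, dotProduct, hM, Matrix.of_apply, Fin.cases_succ]
      have h := hp i
      rw [hf, map_sum] at h
      rw [← C_0, ← h, map_sum]
      refine Finset.sum_congr rfl fun k _ => ?_
      rw [← C_mul]
      congr 1
      simp [eval_monomial, mul_comm]
  obtain ⟨d, hd⟩ : ∃ d : ℂ, M.adjugate j 0 = C d := by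
    refine ⟨Matrix.det (Matrix.of (Fin.cases (Pi.single j (1 : ℂ))
      (fun (i : Fin m) (k : Fin (m + 1)) => eval (p i) (monomial (α k) (1 : ℂ))))), ?_⟩
    rw [Matrix.adjugate_apply, RingHom.map_det]
    congr 1
    ext1 i k
    refine Fin.cases ?_ (fun i => ?_) i
    · by_cases hk : k = j
      · subst hk; simp
      · simp [hk]
    · rw [Matrix.updateRow_ne (Fin.succ_ne_zero i)]
      simp [hM]
  have key : G * C (c j) = C d * f := by
    have h := congrArg (fun v => M.adjugate.mulVec v j) hMc
    simp only [Matrix.mulVec_mulVec, Matrix.adjugate_mul, ← hG] at h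
    simpa [Matrix.smul_mulVec, hd] using h
  have hd0 : d ≠ 0 := by
    rintro rfl
    rw [C_0, zero_mul] at key
    rcases mul_eq_zero.mp key with h | h
    · exact hG0 h
    · exact hj (C_eq_zero.mp h)
  refine ⟨c j / d, div_ne_zero hj hd0, ?_⟩
  rw [div_eq_inv_mul, C_mul, mul_assoc, mul_comm (C (c j)), key, ← mul_assoc, ← C_mul,
    inv_mul_cancel₀ hd0, C_1, one_mul]
end

section
/- Let f = Σ_{i=1}^{m} c_i X^{α_i} be a polynomial in ℂ[x_1,…,x_n] with distinct exponent vectors α_1,…,α_m, let p_1,…,p_{m−1} ∈ ℂ^n be zeros of f, and let G be the determinant of the m×m matrix over ℂ[x_1,…,x_n] whose first row consists of the monomials X^{α_1},…,X^{α_m} and whose (i+1)-th row (for i = 1,…,m−1) consists of the constants P_i^{α_1},…,P_i^{α_m}. For 1 ≤ k ≤ m, let X_k^* denote the determinant of the (m−1)×(m−1) matrix of complex numbers obtained by deleting row 1 and column k (i.e. with entries P_i^{α_j} for i = 1,…,m−1 and j ≠ k). If c_k ≠ 0 and X_k^* ≠ 0 for some k, then G = ((−1)^{k+1} / c_k) ·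 X_k^* · f in ℂ[x_1,…,x_n]. -/
open MvPolynomial

/-- With the interpolation determinant `G` as above, if for some column
`k` (written here zero-based, so that the paper's 1-based column index is `k+1`) the
coefficient `c_k` is nonzero and the `(1,k)`-minor `X_k^*` is nonzero, then
`G = ((-1)^{k+1} / c_k) · X_k^* · f` (with the paper's 1-based sign `(-1)^{(k+1)+1}`). -/
theorem interpolation_determinant_eq_minor_mul_f
    (n m : ℕ)
    (α : Fin (m + 1) → (Fin n →₀ ℕ)) (hα : Function.Injective α)
    (c : Fin (m + 1) → ℂ)
    (f : MvPolynomial (Fin n) ℂ)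
    (hf : f = ∑ i : Fin (m + 1), monomial (α i) (c i))
    (p : Fin m → (Fin n → ℂ))
    (hp : ∀ i : Fin m, eval (p i) f = 0)
    (G : MvPolynomial (Fin n) ℂ)
    (hG : G = Matrix.det (Matrix.of (Fin.cases
      (fun j : Fin (m + 1) => monomial (α j) (1 : ℂ))
      (fun (i : Fin m) (j : Fin (m + 1)) =>
        C (eval (p i) (monomial (α j) (1 : ℂ)))))))
    (k : Fin (m + 1))
    (Xk : ℂ)
    (hXk : Xk = Matrix.det (Matrix.of (fun (i : Fin m) (j : Fin m) =>
      eval (p i) (monomial (α (k.succAbove j)) (1 : ℂ)))))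
    (hck : c k ≠ 0) (hXk0 : Xk ≠ 0) :
    G = C ((-1 : ℂ) ^ (((k : ℕ) + 1) + 1) / c k * Xk) * f := by
  set A : Matrix (Fin (m + 1)) (Fin (m + 1)) (MvPolynomial (Fin n) ℂ) :=
    Matrix.of (Fin.cases
      (fun j : Fin (m + 1) => monomial (α j) (1 : ℂ))
      (fun (i : Fin m) (j : Fin (m + 1)) =>
        C (eval (p i) (monomial (α j) (1 : ℂ))))) with hA
  have hA0 : ∀ j, A 0 j = monomial (α j) (1 : ℂ) := fun j => rfl
  have hAs : ∀ (i : Fin m) j, A i.succ j = C (eval (p i) (monomial (α j) (1 : ℂ))) :=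
    fun i j => rfl
  have hmono : ∀ j, monomial (α j) (c j) = C (c j) * monomial (α j) (1 : ℂ) := by
    intro j
    rw [C_mul_monomial, mul_one]
  have hcol0 : ∑ j, (C (c j) : MvPolynomial (Fin n) ℂ) * A 0 j = f := by
    rw [hf]
    exact Finset.sum_congr rfl fun j _ => by rw [hA0, hmono]
  have hcols : ∀ i : Fin m, ∑ j, (C (c j) : MvPolynomial (Fin n) ℂ) * A i.succ j = 0 := by
    intro i
    have h := hp i
    rw [hf, map_sum] at h
    rw [← C_0, ← h, map_sum]
    refine Finset.sum_congr rfl fun j _ => ?_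
    rw [hAs, hmono, map_mul, eval_C, C_mul]
  have hminor : (A.submatrix (Fin.succAbove 0) k.succAbove).det = C Xk := by
    rw [hXk, RingHom.map_det]
    congr 1
  have key := Matrix.det_updateCol_sum A k (fun j => C (c j))
  rw [Matrix.det_succ_column _ k, Fin.sum_univ_succ] at key
  simp only [Matrix.updateCol_self, hcol0, hcols, Matrix.submatrix_updateCol_succAbove,
    hminor, mul_zero, zero_mul, Finset.sum_const_zero, add_zero, smul_eq_mul] at key
  rw [← hG] at key
  have hc : C (c k)⁻¹ * C (c k) = (1 : MvPolynomial (Fin n) ℂ) := by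
    rw [← C_mul, inv_mul_cancel₀ hck, C_1]
  calc G = C (c k)⁻¹ * (C (c k) * G) := by rw [← mul_assoc, hc, one_mul]
    _ = _ := by
      rw [← key]
      simp [div_eq_mul_inv, pow_succ]
      ring
end

section
/- Let f = Σ_{i=1}^{m} c_i X^{α_i} be a nonzero polynomial in ℂ[x_1,…,x_n] with distinct exponent vectors α_1,…,α_m, let p_1,…,p_{m−1} ∈ ℂ^n be zeros of f, and let G be the determinant of the m×m matrix over ℂ[x_1,…,x_n] whose first row consists of the monomials X^{α_1},…,X^{α_m} and whose (i+1)-th row (for i = 1,…,m−1) consists of the constants P_i^{α_1},…,P_i^{α_m}. For 1 ≤ k ≤ m, let X_k^* denote the determinant of the (m−1)×(m−1) matrix obtained by deleting row 1 and column k. If G ≠ 0, then there exists an index k with c_k ≠ 0 and X_k^* ≠ 0. -/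
open MvPolynomial

/-- With the interpolation determinant `G` as above, if `f ≠ 0` and
`G ≠ 0`, then there is a column index `k` with `c_k ≠ 0` and whose `(1,k)`-minor
`X_k^*` is nonzero. -/
theorem interpolation_exists_nonzero_coeff_and_minor
    (n m : ℕ)
    (α : Fin (m + 1) → (Fin n →₀ ℕ)) (hα : Function.Injective α)
    (c : Fin (m + 1) → ℂ)
    (f : MvPolynomial (Fin n) ℂ)
    (hf : f = ∑ i : Fin (m + 1), monomial (α i) (c i))
    (hf0 : f ≠ 0)
    (p : Fin m → (Fin n → ℂ))
    (hp : ∀ i : Fin m, eval (p i) f = 0)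
    (G : MvPolynomial (Fin n) ℂ)
    (hG : G = Matrix.det (Matrix.of (Fin.cases
      (fun j : Fin (m + 1) => monomial (α j) (1 : ℂ))
      (fun (i : Fin m) (j : Fin (m + 1)) =>
        C (eval (p i) (monomial (α j) (1 : ℂ)))))))
    (hG0 : G ≠ 0) :
    ∃ k : Fin (m + 1), c k ≠ 0 ∧
      Matrix.det (Matrix.of (fun (i : Fin m) (j : Fin m) =>
        eval (p i) (monomial (α (k.succAbove j)) (1 : ℂ)))) ≠ 0 := by
  obtain ⟨k, hk⟩ : ∃ k, c k ≠ 0 := by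
    by_contra! h
    exact hf0 (by simp [hf, h])
  refine ⟨k, hk, fun hdet => ?_⟩
  set M : Matrix (Fin (m + 1)) (Fin (m + 1)) (MvPolynomial (Fin n) ℂ) :=
    Matrix.of (Fin.cases
      (fun j : Fin (m + 1) => monomial (α j) (1 : ℂ))
      (fun (i : Fin m) (j : Fin (m + 1)) =>
        C (eval (p i) (monomial (α j) (1 : ℂ))))) with hM
  have hMc : M.mulVec (fun j => C (c j)) = Pi.single 0 f := by
    funext i
    refine Fin.cases ?_ (fun i => ?_) i
    · simp [hM, Matrix.mulVec, dotProduct, hf, mul_comm, C_mul_monomial]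
    · have h := hp i
      rw [hf, map_sum] at h
      have h2 : (M.mulVec (fun j => C (c j))) i.succ
          = C (∑ j, eval (p i) (monomial (α j) (c j))) := by
        simp only [hM, Matrix.mulVec, dotProduct, Matrix.of_apply, Fin.cases_succ, map_sum]
        refine Finset.sum_congr rfl fun j _ => ?_
        rw [← C_mul]
        congr 1
        simp [eval_monomial, mul_comm]
      rw [h2, h]
      simp
  have hadj : M.adjugate k 0 = 0 := by
    rw [Matrix.adjugate_fin_succ_eq_det_submatrix]
    have h3 : M.submatrix (Fin.succAbove 0) k.succAbove
        = (C : ℂ →+* MvPolynomial (Fin n) ℂ).mapMatrix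
          (Matrix.of (fun (i : Fin m) (j : Fin m) =>
            eval (p i) (monomial (α (k.succAbove j)) (1 : ℂ)))) := by
      ext1 i j
      simp [hM]
    rw [h3, ← RingHom.map_det, hdet]
    simp
  have h4 : M.adjugate.mulVec (M.mulVec (fun j => C (c j))) k = G * C (c k) := by
    rw [Matrix.mulVec_mulVec, Matrix.adjugate_mul, hG]
    simp [Matrix.smul_mulVec]
  rw [hMc, Matrix.mulVec_single] at h4
  simp [hadj, hG0, hk] at h4
end

section
/- Let n₀/n₁ be a rational number in lowest terms with n₀, n₁ positive integers, let L be an integer with L ≥ max(n₁, 2), let K be a positive integer, and let r be a real number with 0 < |r − n₀/n₁| < 1/((2K+2)·L·(L−1)). Let [a₀; a₁, …, a_N] be the canonical regular continued fraction expansion of n₀/n₁ and let [b₀; b₁, b₂, …] be the canonical regular continued fraction expansion of r. Then one of the following two statements holds: (i) bᵢ = aᵢ for i = 0, …, N, the expansion of r has at least N+2 partial quotients, and b_{N+1} ≥ K; or (ii) bᵢ = aᵢ for i = 0, …, N−1, b_N = a_N − 1, b_{N+1} = 1, the expansion of r has at least N+3 partial quotients, and b_{N+2} ≥ K. -/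
open GenContFract

/-- The `i`-th partial quotient of the canonical regular continued fraction expansion
of a real number `x`, produced by the Gauss-map algorithm: `some` of the integer part
computed at step `i`, or `none` if the algorithm has already terminated. -/
noncomputable def cfPartialQuotient (x : ℝ) (i : ℕ) : Option ℤ :=
  (IntFractPair.stream x i).map IntFractPair.b

theorem cfpq_zero (x : ℝ) : cfPartialQuotient x 0 = some ⌊x⌋ := by
  simp [cfPartialQuotient, IntFractPair.stream_zero, IntFractPair.of]

theorem cfpq_succ (x : ℝ) (h : Int.fract x ≠ 0) (n : ℕ) :
    cfPartialQuotient x (n + 1) = cfPartialQuotient (Int.fract x)⁻¹ n := by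
  simp only [cfPartialQuotient, IntFractPair.stream_succ h]

theorem cfpq_one_none (x : ℝ) : cfPartialQuotient x 1 = none ↔ Int.fract x = 0 := by
  constructor
  · intro h
    by_contra h0
    have := cfpq_succ x h0 0
    rw [cfpq_zero] at this
    simp [h] at this
  · intro h
    have : IntFractPair.stream x (0 + 1) = none :=
      IntFractPair.stream_eq_none_of_fr_eq_zero (IntFractPair.stream_zero x) h
    simpa [cfPartialQuotient] using this

theorem cfpq_cons (x z : ℝ) (m : ℤ) (hz : 1 < z) (hx : x = m + 1 / z) :
    cfPartialQuotient x 0 = some m ∧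
      ∀ n, cfPartialQuotient x (n + 1) = cfPartialQuotient z n := by
  have h0 : 0 < 1 / z := by positivity
  have h1 : 1 / z < 1 := by rw [div_lt_one (by linarith)]; exact hz
  have hf : ⌊x⌋ = m := by
    rw [Int.floor_eq_iff, hx]; constructor <;> linarith
  have hfr : Int.fract x = 1 / z := by
    rw [Int.fract, hf, hx]; ring
  refine ⟨by rw [cfpq_zero, hf], fun n => ?_⟩
  rw [cfpq_succ x (by rw [hfr]; exact h0.ne'), hfr]
  simp

theorem cfpq_main (N : ℕ) : ∀ (x : ℝ) (a : ℕ → ℤ),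
    (∀ i ≤ N, cfPartialQuotient x i = some (a i)) →
    cfPartialQuotient x (N + 1) = none →
    ∃ p q p' q' : ℤ, 1 ≤ q ∧ 0 ≤ q' ∧ q' ≤ q ∧ x = p / q ∧
      (p * q' - p' * q = 1 ∨ p * q' - p' * q = -1) ∧
      (1 < x → q < p ∧ q' ≤ p' ∧ q - q' ≤ p - p') ∧
      (∀ y r : ℝ, 1 < y → r = (p * y + p') / (q * y + q') →
        (∀ i ≤ N, cfPartialQuotient r i = some (a i)) ∧
        cfPartialQuotient r (N + 1) = some ⌊y⌋) ∧
      (∀ y r : ℝ, 1 < y → r = (p * y + (p - p')) / (q * y + (q - q')) →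
        (∀ i < N, cfPartialQuotient r i = some (a i)) ∧
        cfPartialQuotient r N = some (a N - 1) ∧
        cfPartialQuotient r (N + 1) = some 1 ∧
        cfPartialQuotient r (N + 2) = some ⌊y⌋) := by
  induction N with
  | zero =>
    intro x a ha hN
    have hfr := (cfpq_one_none x).1 hN
    have h0 := ha 0 le_rfl
    rw [cfpq_zero] at h0
    have hfl : ⌊x⌋ = a 0 := by simpa using h0
    have hx : x = a 0 := by
      rw [Int.fract, hfl] at hfr; linarith
    refine ⟨a 0, 1, 1, 0, by norm_num, by norm_num, by norm_num, by simp [hx], by norm_num, ?_,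
      ?_, ?_⟩
    · intro h1
      rw [hx] at h1
      have : (1 : ℤ) < a 0 := by exact_mod_cast h1
      omega
    · intro y r hy hr
      have hr' : r = (a 0 : ℤ) + 1 / y := by
        rw [hr]; push_cast; field_simp; ring
      obtain ⟨e0, e1⟩ := cfpq_cons r y _ hy hr'
      refine ⟨fun i hi => ?_, ?_⟩
      · obtain rfl : i = 0 := by omega
        exact e0
      · rw [e1, cfpq_zero]
    · intro y r hy hr
      have hy0 : 0 < y := by linarith
      have hz : 1 < 1 + 1 / y := by
        have : 0 < 1 / y := by positivity
        linarith
      have hr' : r = ((a 0 - 1 : ℤ) : ℝ) + 1 / (1 + 1 / y) := by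
        rw [hr]; push_cast; field_simp; ring
      obtain ⟨e0, e1⟩ := cfpq_cons r _ _ hz hr'
      obtain ⟨f0, f1⟩ := cfpq_cons (1 + 1 / y) y 1 hy (by norm_num)
      refine ⟨fun i hi => by omega, e0, ?_, ?_⟩
      · rw [e1, f0]
      · rw [e1, f1, cfpq_zero]
  | succ N ih =>
    intro x a ha hN
    have hfr : Int.fract x ≠ 0 := by
      intro h
      have h1 := (cfpq_one_none x).2 h
      rw [ha 1 (by omega)] at h1
      simp at h1
    have h0 := ha 0 (by omega)
    rw [cfpq_zero] at h0
    have hfl : ⌊x⌋ = a 0 := by simpa using h0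
    have hpos : 0 < Int.fract x := lt_of_le_of_ne (Int.fract_nonneg x) (Ne.symm hfr)
    have hx1 : 1 < (Int.fract x)⁻¹ := (one_lt_inv₀ hpos).2 (Int.fract_lt_one x)
    obtain ⟨p, q, p', q', hq, hq0, hqq, hx', hdet, hinv, hA, hB⟩ :=
      ih (Int.fract x)⁻¹ (fun i => a (i + 1))
        (fun i hi => by rw [← cfpq_succ x hfr]; exact ha (i + 1) (by omega))
        (by rw [← cfpq_succ x hfr]; exact hN)
    obtain ⟨i1, i2, i3⟩ := hinv hx1
    have hqR : (1 : ℝ) ≤ q := by exact_mod_cast hq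
    have hq0R : (0 : ℝ) ≤ q' := by exact_mod_cast hq0
    have hqqR : (q' : ℝ) ≤ q := by exact_mod_cast hqq
    have i1R : (q : ℝ) < p := by exact_mod_cast i1
    have i2R : (q' : ℝ) ≤ p' := by exact_mod_cast i2
    have i3R : (q - q' : ℝ) ≤ p - p' := by exact_mod_cast i3
    have hp0 : (0 : ℝ) < p := by linarith
    have hxe : x = a 0 + q / p := by
      have h1 : Int.fract x = q / p := by
        rw [← inv_inv (Int.fract x), hx', inv_div]
      rw [← h1, ← hfl]; exact (Int.floor_add_fract x).symm
    refine ⟨a 0 * p + q, p, a 0 * p' + q', p', by omega, by omega, by omega, ?_, ?_, ?_, ?_, ?_⟩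
    · rw [hxe]; push_cast; field_simp
    · rcases hdet with h | h
      · right; linear_combination -h
      · left; linear_combination -h
    · intro h1
      have ha0 : 1 ≤ a 0 := by
        rw [← hfl, Int.le_floor]; exact_mod_cast h1.le
      have t0 : 0 ≤ a 0 - 1 := by omega
      have t1 := mul_nonneg t0 (show 0 ≤ p by omega)
      have t2 := mul_nonneg t0 (show 0 ≤ p' by omega)
      have t3 := mul_nonneg t0 (show 0 ≤ p - p' by omega)
      refine ⟨by nlinarith, by nlinarith, by nlinarith⟩
    · intro y r hy hr
      have d1 : 0 < (q * y + q' : ℝ) := by nlinarith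
      have d2 : (q * y + q' : ℝ) < p * y + p' := by nlinarith
      have hz : 1 < ((p * y + p') / (q * y + q') : ℝ) := by rwa [one_lt_div d1]
      have d3 : 0 < (p * y + p' : ℝ) := by linarith
      obtain ⟨e0, e1⟩ := cfpq_cons r _ (a 0) hz (by
        rw [hr]; push_cast; field_simp; ring)
      obtain ⟨f0, f1⟩ := hA y _ hy rfl
      refine ⟨fun i hi => ?_, by rw [e1, f1]⟩
      cases i with
      | zero => exact e0
      | succ i => rw [e1]; exact f0 i (by omega)
    · intro y r hy hr
      have d1 : 0 < (q * y + (q - q') : ℝ) := by nlinarith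
      have d2 : (q * y + (q - q') : ℝ) < p * y + (p - p') := by nlinarith
      have hz : 1 < ((p * y + (p - p')) / (q * y + (q - q')) : ℝ) := by rwa [one_lt_div d1]
      have d3 : 0 < (p * y + (p - p') : ℝ) := by linarith
      obtain ⟨e0, e1⟩ := cfpq_cons r _ (a 0) hz (by
        rw [hr]; push_cast; field_simp; ring)
      obtain ⟨f0, f1, f2, f3⟩ := hB y _ hy rfl
      refine ⟨fun i hi => ?_, by rw [e1, f1], by rw [e1, f2], by rw [e1, f3]⟩
      cases i with
      | zero => exact e0
      | succ i => rw [e1]; exact f0 i (by omega)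

theorem cfpq_solve (P Q P' Q' d K : ℝ) (hQ : 1 ≤ Q) (h0 : 0 ≤ Q') (h1 : Q' ≤ Q) (hK : 0 < K)
    (hd : 0 < |d|) (hs : -(P * Q' - P' * Q) * |d| = d) (hb : (K + 1) * Q ^ 2 * |d| < 1) :
    ∃ y : ℝ, K < y ∧ P / Q + d = (P * y + P') / (Q * y + Q') := by
  generalize |d| = e at *
  have hQ0 : 0 < Q := by linarith
  refine ⟨(1 / (Q * e) - Q') / Q, ?_, ?_⟩
  · have : (K + 1) * Q < 1 / (Q * e) := by
      rw [lt_div_iff₀ (by positivity)]; nlinarith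
    rw [lt_div_iff₀ hQ0]; nlinarith
  · have hden : Q * ((1 / (Q * e) - Q') / Q) + Q' = 1 / (Q * e) := by
      field_simp; ring
    rw [hden, ← hs]
    field_simp
    ring

/-- Let `n₀/n₁` be a positive rational in lowest terms, `L ≥ max(n₁, 2)`,
`K` a positive integer, and `r` a real number with
`0 < |r − n₀/n₁| < 1/((2K+2)·L·(L−1))`.  If the canonical continued fraction
expansion of `n₀/n₁` is `[a₀; a₁, …, a_N]`, and `bᵢ` denote the partial quotients of
the canonical expansion of `r`, then either (i) `bᵢ = aᵢ` for `i = 0, …, N` and the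
expansion of `r` has a further partial quotient `b_{N+1} ≥ K`; or (ii) `bᵢ = aᵢ` for
`i = 0, …, N−1`, `b_N = a_N − 1`, `b_{N+1} = 1`, and the expansion of `r` has a
further partial quotient `b_{N+2} ≥ K`. -/
theorem continued_fraction_of_approximation
    (n₀ n₁ : ℕ) (hn₀ : 0 < n₀) (hn₁ : 0 < n₁) (hcop : Nat.Coprime n₀ n₁)
    (L : ℤ) (hL : max (n₁ : ℤ) 2 ≤ L)
    (K : ℕ) (hK : 0 < K)
    (r : ℝ)
    (hne : 0 < |r - (n₀ : ℝ) / (n₁ : ℝ)|)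
    (hlt : |r - (n₀ : ℝ) / (n₁ : ℝ)| < 1 / (((2 * K + 2 : ℕ) : ℝ) * (L : ℝ) * ((L : ℝ) - 1)))
    (N : ℕ) (a : ℕ → ℤ)
    (ha : ∀ i ≤ N, cfPartialQuotient ((n₀ : ℝ) / (n₁ : ℝ)) i = some (a i))
    (haN : cfPartialQuotient ((n₀ : ℝ) / (n₁ : ℝ)) (N + 1) = none) :
    ((∀ i ≤ N, cfPartialQuotient r i = some (a i)) ∧
      ∃ q : ℤ, cfPartialQuotient r (N + 1) = some q ∧ (K : ℤ) ≤ q) ∨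
    ((∀ i < N, cfPartialQuotient r i = some (a i)) ∧
      cfPartialQuotient r N = some (a N - 1) ∧
      cfPartialQuotient r (N + 1) = some 1 ∧
      ∃ q : ℤ, cfPartialQuotient r (N + 2) = some q ∧ (K : ℤ) ≤ q) := by
  obtain ⟨p, q, p', q', hq, hq0, hqq, hx, hdet, -, hA, hB⟩ := cfpq_main N _ a ha haN
  have hqR : (1 : ℝ) ≤ q := by exact_mod_cast hq
  have hq0R : (0 : ℝ) ≤ q' := by exact_mod_cast hq0
  have hqqR : (q' : ℝ) ≤ q := by exact_mod_cast hqq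
  have hn₁R : (0 : ℝ) < n₁ := by exact_mod_cast hn₁
  have hKR : (1 : ℝ) ≤ K := by exact_mod_cast hK
  have hqn : q ≤ n₁ := by
    have hcr : (n₀ : ℤ) * q = p * n₁ := by
      rw [div_eq_div_iff hn₁R.ne' (by linarith)] at hx
      exact_mod_cast hx
    have hc : IsCoprime q p := by
      rcases hdet with h | h
      · exact ⟨-p', q', by linear_combination h⟩
      · exact ⟨p', -q', by linear_combination -h⟩
    have : q ∣ p * n₁ := ⟨n₀, by linear_combination -hcr⟩
    exact Int.le_of_dvd (by exact_mod_cast hn₁) (hc.dvd_of_dvd_mul_left this)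
  have hL1 : (q : ℝ) ≤ L := by exact_mod_cast hqn.trans ((le_max_left _ _).trans hL)
  have hL2 : (2 : ℝ) ≤ L := by exact_mod_cast (le_max_right _ _).trans hL
  rw [hx] at hne hlt
  generalize hd : r - (p : ℝ) / q = d at *
  have hr : r = p / q + d := by linarith
  have hb : ((K : ℝ) + 1) * (q : ℝ) ^ 2 * |d| < 1 := by
    have hLL : 0 < (L : ℝ) - 1 := by linarith
    rw [lt_div_iff₀ (by positivity)] at hlt
    push_cast at hlt
    have h2 : (q : ℝ) ^ 2 ≤ 2 * (L * (L - 1)) := by nlinarith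
    have h3 : ((K : ℝ) + 1) * |d| * (q : ℝ) ^ 2 ≤ ((K : ℝ) + 1) * |d| * (2 * (L * (L - 1))) :=
      mul_le_mul_of_nonneg_left h2 (by positivity)
    nlinarith
  have hcase : -((p : ℝ) * q' - p' * q) * |d| = d ∨
      -((p : ℝ) * (q - q') - (p - p') * q) * |d| = d := by
    have hdR : (p : ℝ) * q' - p' * q = 1 ∨ (p : ℝ) * q' - p' * q = -1 := by exact_mod_cast hdet
    have e : (p : ℝ) * (q - q') - (p - p') * q = -((p : ℝ) * q' - p' * q) := by ring
    rw [e]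
    rcases hdR with h | h <;> rw [h] <;> rcases abs_cases d with ⟨h', _⟩ | ⟨h', _⟩ <;> rw [h'] <;>
      simp
  rcases hcase with hs | hs
  · left
    obtain ⟨y, hy, he⟩ := cfpq_solve p q p' q' d K hqR hq0R hqqR (by linarith) hne hs hb
    obtain ⟨f0, f1⟩ := hA y r (by linarith) (hr.trans he)
    exact ⟨f0, _, f1, Int.le_floor.2 (by exact_mod_cast hy.le)⟩
  · right
    obtain ⟨y, hy, he⟩ := cfpq_solve p q (p - p') (q - q') d K hqR (by linarith) (by linarith)
      (by linarith) hne hs hb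
    obtain ⟨f0, f1, f2, f3⟩ := hB y r (by linarith) (hr.trans he)
    exact ⟨f0, f1, f2, _, f3, Int.le_floor.2 (by exact_mod_cast hy.le)⟩
end

section
/- Fix a monomial order on the multivariate polynomial ring ℚ[x_1,…,x_n]. Let g ∈ ℚ[x_1,…,x_n] be monic with respect to this order (its leading coefficient equals 1), and suppose g = h_1 · h_2 ⋯ h_m where each h_i ∈ ℚ[x_1,…,x_n] is monic with respect to this order. Let N > 0 be the least common multiple of the denominators of the coefficients of g. Then for every i and every monomial, the denominator of the corresponding coefficient of h_i divides N; in particular, N is an upper bound for the absolute values of the denominators of the coefficients of every h_i. -/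
open MvPolynomial

/-- The degree (leading exponent vector) of a multivariate polynomial with respect to
a monomial order `mo`: the largest exponent vector of its support in the order. -/
noncomputable def moDegree {σ : Type*} (mo : MonomialOrder σ) {R : Type*} [CommSemiring R]
    (f : MvPolynomial σ R) : σ →₀ ℕ :=
  mo.toSyn.symm (f.support.sup fun d => mo.toSyn d)

/-- A multivariate polynomial is monic with respect to a monomial order `mo` if its
leading coefficient (the coefficient at the largest exponent vector of its support)
equals `1`. -/
noncomputable def moMonic {σ : Type*} (mo : MonomialOrder σ) {R : Type*} [CommSemiring R]
    (f : MvPolynomial σ R) : Prop :=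
  MvPolynomial.coeff (moDegree mo f) f = 1

theorem aux_int {n : ℕ} (f : MvPolynomial (Fin n) ℚ) (D : ℕ) (hD : ∀ d, (coeff d f).den ∣ D) :
    ∃ F : MvPolynomial (Fin n) ℤ, map (Int.castRingHom ℚ) F = C (D : ℚ) * f := by
  refine ⟨∑ d ∈ f.support, monomial d ((coeff d f).num * ((D / (coeff d f).den : ℕ) : ℤ)), ?_⟩
  conv_rhs => rw [f.as_sum, Finset.mul_sum]
  rw [map_sum]
  refine Finset.sum_congr rfl fun d _ => ?_
  rw [map_monomial, C_mul_monomial]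
  congr 1
  have h0 : ((coeff d f).den : ℚ) ≠ 0 := by exact_mod_cast (coeff d f).den_nz
  have h1 := Rat.num_div_den (coeff d f)
  simp only [eq_intCast, Int.cast_mul, Int.cast_natCast]
  rw [Nat.cast_div (hD d) h0]
  conv_rhs => rw [← h1]
  ring

theorem aux_den (q : ℚ) (D : ℕ) (hD : 0 < D) (z : ℤ) (hz : (z : ℚ) = D * q) : q.den ∣ D := by
  have h0 : (D : ℚ) ≠ 0 := by exact_mod_cast hD.ne'
  have : q = Rat.divInt z D := by
    rw [Rat.divInt_eq_div]; push_cast; rw [hz]; field_simp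
  have h := Rat.den_dvd z D
  rw [← this] at h
  exact_mod_cast h

theorem aux_lcm {n : ℕ} (f : MvPolynomial (Fin n) ℚ) (d : Fin n →₀ ℕ) :
    (coeff d f).den ∣ f.support.lcm fun d => (coeff d f).den := by
  by_cases hd : d ∈ f.support
  · exact Finset.dvd_lcm (f := fun d => (coeff d f).den) hd
  · rw [notMem_support_iff.mp hd]; simp

/-- An integral primitive multiple of a polynomial having a coefficient `1`. -/
theorem aux_prim {n : ℕ} (f : MvPolynomial (Fin n) ℚ) (e : Fin n →₀ ℕ) (he : coeff e f = 1) :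
    ∃ (D : ℕ) (F : MvPolynomial (Fin n) ℤ), (∀ d, (coeff d f).den ∣ D) ∧
      map (Int.castRingHom ℚ) F = C (D : ℚ) * f ∧
      ∀ p : ℕ, p.Prime → ¬ C (p : ℤ) ∣ F := by
  obtain ⟨F, hF⟩ := aux_int f _ (aux_lcm f)
  refine ⟨_, F, aux_lcm f, hF, ?_⟩
  set D := f.support.lcm fun d => (coeff d f).den with hDdef
  have hD0 : 0 < D := by
    refine Nat.pos_of_ne_zero fun h => ?_
    rw [hDdef, Finset.lcm_eq_zero_iff] at h
    simp at h
  have hc : ∀ d, ((coeff d F : ℤ) : ℚ) = D * coeff d f := by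
    intro d
    have := congrArg (coeff d) hF
    rwa [coeff_map, coeff_C_mul] at this
  rintro p hp hdiv
  rw [C_dvd_iff_dvd_coeff] at hdiv
  have h1 : coeff e F = D := by
    have := hc e
    rw [he, mul_one] at this
    exact_mod_cast this
  obtain ⟨D', hD'⟩ : p ∣ D := by
    have := hdiv e
    rw [h1] at this
    exact_mod_cast this
  have hD'0 : 0 < D' := Nat.pos_of_ne_zero fun h => by simp [h] at hD'; omega
  have hlt : D ∣ D' := by
    rw [hDdef]
    refine Finset.lcm_dvd fun d _ => ?_
    obtain ⟨z, hz⟩ := hdiv d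
    refine aux_den _ _ hD'0 z ?_
    have := hc d
    rw [hz, hD'] at this
    push_cast at this
    have hp0 : (p : ℚ) ≠ 0 := by exact_mod_cast hp.ne_zero
    apply mul_left_cancel₀ hp0
    rw [this]; ring
  have := Nat.le_of_dvd hD'0 hlt
  have := hp.two_le
  nlinarith

theorem aux_prime {n p : ℕ} (hp : p.Prime) : Prime (C (p : ℤ) : MvPolynomial (Fin n) ℤ) :=
  (prime_C_iff _).mpr (Nat.prime_iff_prime_int.mp hp)

theorem aux_dvd {n : ℕ} (G : MvPolynomial (Fin n) ℤ) (hG : ∀ p : ℕ, p.Prime → ¬ C (p : ℤ) ∣ G) (P : ℕ) :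
    ∀ N : ℕ, C (P : ℤ) ∣ C (N : ℤ) * G → P ∣ N := by
  have hG0 : G ≠ 0 := fun h => hG 2 Nat.prime_two (h ▸ dvd_zero _)
  induction P using induction_on_primes with
  | zero =>
    intro N h
    simp [hG0] at h
    simp [h]
  | one => simp
  | prime_mul p P hp ih =>
    intro N h
    have h1 : C (p : ℤ) ∣ C (N : ℤ) * G :=
      dvd_trans ⟨C (P : ℤ), by rw [← C_mul]; push_cast; rfl⟩ h
    have h2 := ((aux_prime hp).dvd_or_dvd h1).resolve_right (hG p hp)
    rw [C_dvd_iff_dvd_coeff] at h2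
    have h3 := h2 0
    rw [coeff_zero_C] at h3
    obtain ⟨N', rfl⟩ : p ∣ N := by exact_mod_cast h3
    refine mul_dvd_mul_left p (ih N' ?_)
    rw [Nat.cast_mul, Nat.cast_mul, C_mul, C_mul, mul_assoc] at h
    exact (mul_dvd_mul_iff_left (aux_prime hp).ne_zero).mp h

/-- If `g ∈ ℚ[x₁,…,xₙ]` is monic w.r.t. a monomial order and factors as a
product of polynomials `hᵢ` monic w.r.t. the same order, and `N > 0` is the least
common multiple of the denominators of the coefficients of `g`, then every
denominator of a coefficient of every `hᵢ` divides `N`; in particular it is at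
most `N`. -/
theorem denominator_bound_of_monic_factors
    (n : ℕ) (mo : MonomialOrder (Fin n))
    (g : MvPolynomial (Fin n) ℚ) (hg : moMonic mo g)
    (m : ℕ) (h : Fin m → MvPolynomial (Fin n) ℚ)
    (hmonic : ∀ i, moMonic mo (h i))
    (hprod : g = ∏ i, h i)
    (N : ℕ) (hN : N = g.support.lcm fun d => (MvPolynomial.coeff d g).den)
    (hNpos : 0 < N) :
    ∀ i, ∀ d : Fin n →₀ ℕ,
      (MvPolynomial.coeff d (h i)).den ∣ N ∧ (MvPolynomial.coeff d (h i)).den ≤ N := by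

  intro i d
  choose D F hD hF hP using fun i => aux_prim (h i) _ (hmonic i)
  have key : (∏ i, D i) ∣ N := by
    refine aux_dvd (∏ i, F i) ?_ _ _ ?_
    · intro p hp hdiv
      obtain ⟨j, _, hj⟩ := (aux_prime hp).exists_mem_finset_dvd hdiv
      exact hP j p hp hj
    · obtain ⟨G, hG⟩ := aux_int g N (fun d => hN ▸ aux_lcm g d)
      refine ⟨G, ?_⟩
      apply map_injective (Int.castRingHom ℚ) Int.cast_injective
      rw [map_mul, map_mul, hG, map_prod, Finset.prod_congr rfl (fun i _ => hF i),
        Finset.prod_mul_distrib, ← hprod, map_C, map_C]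
      simp only [eq_intCast, Int.cast_natCast, Nat.cast_prod, map_prod]
      ring
  have hd : (coeff d (h i)).den ∣ N :=
    (hD i d).trans ((Finset.dvd_prod_of_mem D (Finset.mem_univ i)).trans key)
  exact ⟨hd, Nat.le_of_dvd hNpos hd⟩
end

section
/- Fix a monomial order on the multivariate polynomial ring ℚ[x_1,…,x_n]. Let g ∈ ℚ[x_1,…,x_n] be monic with respect to this order (its leading coefficient equals 1), and suppose g = h_1 · h_2 ⋯ h_m where each h_i ∈ ℚ[x_1,…,x_n] is monic with respect to this order. Let N > 0 be the least common multiple of the denominators of the coefficients of g, and for each i let N_i > 0 be the least common multiple of the denominators of the coefficients of h_i. Then N = N_1 · N_2 ⋯ N_m. -/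
open MvPolynomial

lemma aux_dvd_of_map {n : ℕ} (f : MvPolynomial (Fin n) ℚ) (K : ℕ) (hK : 0 < K)
    (F : MvPolynomial (Fin n) ℤ)
    (hF : MvPolynomial.map (Int.castRingHom ℚ) F = C (K : ℚ) * f) :
    (f.support.lcm fun d => (MvPolynomial.coeff d f).den) ∣ K := by
  apply Finset.lcm_dvd
  intro d _
  have h1 := congrArg (coeff d) hF
  rw [coeff_map, coeff_C_mul] at h1
  simp only [eq_intCast] at h1
  have hK0 : (K : ℚ) ≠ 0 := by positivity
  have h2 : coeff d f = ((coeff d F : ℤ) : ℚ) / ((K : ℤ) : ℚ) := by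
    rw [h1]; push_cast; field_simp
  have h3 := Rat.den_dvd (coeff d F) (K : ℤ)
  rw [Rat.divInt_eq_div, ← h2] at h3
  exact_mod_cast h3

lemma aux_map_of_dvd {n : ℕ} (f : MvPolynomial (Fin n) ℚ) (K : ℕ)
    (h : (f.support.lcm fun d => (MvPolynomial.coeff d f).den) ∣ K) :
    ∃ F : MvPolynomial (Fin n) ℤ,
      MvPolynomial.map (Int.castRingHom ℚ) F = C (K : ℚ) * f := by
  have key : ∀ d, ∃ z : ℤ, (z : ℚ) = K * coeff d f := by
    intro d
    by_cases hd : d ∈ f.support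
    · obtain ⟨t, ht⟩ := (Finset.dvd_lcm (f := fun d => (MvPolynomial.coeff d f).den) hd).trans h
      refine ⟨t * (coeff d f).num, ?_⟩
      have := Rat.mul_den_eq_num (coeff d f)
      rw [ht]; push_cast; rw [← this]; ring
    · exact ⟨0, by simp [notMem_support_iff.1 hd]⟩
  choose z hz using key
  refine ⟨∑ d ∈ f.support, monomial d (z d), ?_⟩
  ext e
  rw [coeff_map, coeff_C_mul, coeff_sum, eq_intCast]
  simp only [coeff_monomial, Finset.sum_ite_eq']
  split_ifs with he
  · exact hz e
  · simp [notMem_support_iff.1 he]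

/-- If `g ∈ ℚ[x₁,…,xₙ]` is monic w.r.t. a monomial order and factors as a
product of polynomials `hᵢ` monic w.r.t. the same order, `N > 0` is the lcm of the
denominators of the coefficients of `g`, and `Nᵢ > 0` is the lcm of the denominators
of the coefficients of `hᵢ`, then `N = N₁ · N₂ ⋯ Nₘ`. -/
theorem lcm_denominators_of_monic_factorization
    (n : ℕ) (mo : MonomialOrder (Fin n))
    (g : MvPolynomial (Fin n) ℚ) (hg : moMonic mo g)
    (m : ℕ) (h : Fin m → MvPolynomial (Fin n) ℚ)
    (hmonic : ∀ i, moMonic mo (h i))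
    (hprod : g = ∏ i, h i)
    (N : ℕ) (hN : N = g.support.lcm fun d => (MvPolynomial.coeff d g).den)
    (hNpos : 0 < N)
    (Ni : Fin m → ℕ)
    (hNi : ∀ i, Ni i = (h i).support.lcm fun d => (MvPolynomial.coeff d (h i)).den)
    (hNipos : ∀ i, 0 < Ni i) :
    N = ∏ i, Ni i := by
  have inj : Function.Injective (MvPolynomial.map (σ := Fin n) (Int.castRingHom ℚ)) :=
    map_injective _ Int.cast_injective
  have hex := fun i => aux_map_of_dvd (h i) (Ni i) (by rw [hNi i])
  choose F hF using hex
  -- each `F i` is primitive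
  have hprim : ∀ i (p : ℕ), p.Prime → ¬ (C (p : ℤ) ∣ F i) := by
    rintro i p hp ⟨G, hG⟩
    have hp0 : (p : ℚ) ≠ 0 := by exact_mod_cast hp.ne_zero
    have hi := hF i
    rw [hG, map_mul, map_C] at hi
    have h1 := congrArg (coeff (moDegree mo (h i))) hi
    have hm : coeff (moDegree mo (h i)) (h i) = 1 := hmonic i
    rw [coeff_C_mul, coeff_C_mul, hm, coeff_map] at h1
    simp only [eq_intCast, mul_one] at h1
    have h2 : (p : ℤ) ∣ (Ni i : ℤ) := ⟨_, by exact_mod_cast h1.symm⟩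
    obtain ⟨t, ht⟩ := Int.natCast_dvd_natCast.1 h2
    have hpos := hNipos i
    have ht0 : 0 < t := by
      rcases Nat.eq_zero_or_pos t with h0 | h0
      · simp [h0] at ht; omega
      · exact h0
    have h3 : MvPolynomial.map (Int.castRingHom ℚ) G = C (t : ℚ) * h i := by
      have hC : (C (p : ℚ) : MvPolynomial (Fin n) ℚ) ≠ 0 := by simpa using hp.ne_zero
      apply mul_left_cancel₀ hC
      rw [ht] at hi
      rw [← mul_assoc, ← C_mul]
      simpa using hi
    have h4 := aux_dvd_of_map _ _ ht0 _ h3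
    rw [← hNi i] at h4
    have h5 := Nat.le_of_dvd ht0 h4
    have := hp.two_le
    nlinarith
  have hmap : MvPolynomial.map (Int.castRingHom ℚ) (∏ i, F i)
      = C ((∏ i, Ni i : ℕ) : ℚ) * g := by
    rw [map_prod, hprod, Nat.cast_prod, map_prod, ← Finset.prod_mul_distrib]
    exact Finset.prod_congr rfl fun i _ => hF i
  have hpos : 0 < ∏ i, Ni i := Finset.prod_pos fun i _ => hNipos i
  have hdvd := aux_dvd_of_map g _ hpos _ hmap
  rw [← hN] at hdvd
  obtain ⟨t, ht⟩ := hdvd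
  by_cases ht1 : t = 1
  · rw [ht, ht1, mul_one]
  exfalso
  obtain ⟨p, hp, s, hs⟩ := Nat.exists_prime_and_dvd ht1
  obtain ⟨G, hG⟩ := aux_map_of_dvd g N (by rw [hN])
  have hd : C (p : ℤ) ∣ ∏ i, F i := by
    refine ⟨C (s : ℤ) * G, inj ?_⟩
    rw [hmap, map_mul, map_mul, hG, map_C, map_C, ht, hs]
    simp only [eq_intCast, Int.cast_natCast, Nat.cast_mul, C_mul]
    ring
  have hpC : Prime (C (p : ℤ) : MvPolynomial (Fin n) ℤ) :=
    (prime_C_iff _).2 (Nat.prime_iff_prime_int.1 hp)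
  obtain ⟨i, _, hi⟩ := (hpC.dvd_finsetProd_iff _).1 hd
  exact hprim i p hp hi
end
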